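/- Let k be an algebraically closed field, A a finitely generated integral domain over k with a 𝔾ₐ-coaction β, b(t) a nonzero additive polynomial, and h ∈ A^{𝔾ₐ} nonzero. Suppose that β(f) − f lies in the ideal of A[t] generated by b(t) for every f ∈ A, and that there exist g ∈ A and e ∈ ℕ with β(g) = g + b(t)·h^e (a quasi-principle b(t)-pair (g, h^e)). Then there exists a k-algebra isomorphism φ from the polynomial ring (A_h)^{𝔾ₐ}[T] onto A_h that restricts to the inclusion on (A_h)^{𝔾ₐ} and satisfies β_h(φ(T)) = φ(T) + b(t) in A_h[t]. -/

import Mathlib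

open Polynomial

/-- Substitute `t ↦ t₁ + t₂` into a polynomial, landing in `R[t₁][t₂]`
(inner variable `t₁`, outer variable `t₂`). -/
noncomputable def coaddSubst {R : Type*} [CommSemiring R] (p : Polynomial R) :
    Polynomial (Polynomial R) :=
  p.eval₂ ((Polynomial.C : Polynomial R →+* Polynomial (Polynomial R)).comp
      (Polynomial.C : R →+* Polynomial R))
    (Polynomial.C Polynomial.X + Polynomial.X)

/-- A 𝔾ₐ-coaction on a commutative `k`-algebra `A`: a `k`-algebra homomorphism
`β : A → A[t]` satisfying the counit and coassociativity axioms. -/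
def IsGaCoaction {k A : Type*} [CommSemiring k] [CommSemiring A] [Algebra k A]
    (β : A →ₐ[k] Polynomial A) : Prop :=
  (∀ a : A, (β a).eval 0 = a) ∧
  (∀ a : A, coaddSubst (β a) = (β a).map β.toRingHom)

/-- `c(t) ∈ k[t]` is additive: `c(t₁+t₂) = c(t₁) + c(t₂)` in `k[t₁][t₂]`. -/
def IsAdditivePoly {k : Type*} [CommSemiring k] (c : Polynomial k) : Prop :=
  coaddSubst c = Polynomial.C c + c.map (Polynomial.C : k →+* Polynomial k)

/-!
Since `(β f)(t₁ + t₂) ≡ (β f)(t₁)` modulo `b(t₂)`, repeated division by `b` shows that `β f` is a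
polynomial in `b`. The coaction thus factors through the quotient `𝔾ₐ → 𝔾ₐ`, `t ↦ u = b(t)`: there
is a coaction `γ` with the same invariants such that `β f = (γ f)(b)`. An element `s` with
`β s = s + b(t)` satisfies `γ s = s + u`, and such a slice is a coordinate over the invariants:
`f = Q(s)`, where `Q = (γ f)(u - s)` has invariant coefficients. Once `h` is inverted, `g / h ^ e`
is such an `s`.
-/

section CoaddSubst

variable {R T : Type*}

section Semiring

variable [CommSemiring R] [CommSemiring T]

theorem coaddSubst_map (i : R →+* T) (p : R[X]) :
    coaddSubst (p.map i) = (coaddSubst p).map (mapRingHom i) := by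
  induction p using Polynomial.induction_on' with
  | add p q hp hq => simp_all [coaddSubst]
  | monomial n r => simp [coaddSubst, eval₂_monomial]

theorem eval_coaddSubst (p q : R[X]) : (coaddSubst p).eval q = p.comp (X + q) := by
  induction p using Polynomial.induction_on' with
  | add p₁ p₂ h₁ h₂ => simp_all [coaddSubst]
  | monomial n r => simp [coaddSubst, eval₂_monomial]

theorem map_evalRingHom_coaddSubst (p : R[X]) (x : R) :
    (coaddSubst p).map (evalRingHom x) = p.comp (C x + X) := by
  induction p using Polynomial.induction_on' with
  | add p q hp hq => simp_all [coaddSubst]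
  | monomial n r => simp [coaddSubst, eval₂_monomial]

theorem IsAdditivePoly.map {p : R[X]} (hp : IsAdditivePoly p) (i : R →+* T) :
    IsAdditivePoly (p.map i) := by
  rw [IsAdditivePoly, coaddSubst_map, hp, Polynomial.map_add, map_C, coe_mapRingHom, map_map,
    map_map, mapRingHom_comp_C]

theorem IsAdditivePoly.coaddSubst_comp {b : R[X]} (hb : IsAdditivePoly b) (p : R[X]) :
    coaddSubst (p.comp b) = ((coaddSubst p).map (compRingHom b)).comp (b.map C) := by
  rw [coaddSubst, eval₂_comp, ← coaddSubst, hb]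
  induction p using Polynomial.induction_on' with
  | add p q hp hq => simp_all [coaddSubst]
  | monomial n r => simp [coaddSubst, eval₂_monomial]

end Semiring

section Ring

variable [CommRing R]

theorem IsAdditivePoly.eval_zero {p : R[X]} (hp : IsAdditivePoly p) : p.eval 0 = 0 := by
  have h : p = p + C (p.eval 0) := by
    simpa [eval_coaddSubst] using congrArg (Polynomial.eval 0) hp
  simpa using h

theorem IsAdditivePoly.natDegree_ne_zero [Nontrivial R] {p : R[X]} (hp : IsAdditivePoly p)
    (hunit : IsUnit p.leadingCoeff) : p.natDegree ≠ 0 := by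
  intro hdeg
  rw [leadingCoeff, hdeg, coeff_zero_eq_eval_zero, hp.eval_zero] at hunit
  exact not_isUnit_zero hunit

end Ring

end CoaddSubst

section UnitLeadingCoeff

variable {R : Type*} [CommRing R]

theorem isUnit_leadingCoeff_map {T : Type*} [CommRing T] {p : R[X]} (hp : IsUnit p.leadingCoeff)
    (i : R →+* T) : IsUnit (p.map i).leadingCoeff := by
  cases subsingleton_or_nontrivial T
  · exact isUnit_of_subsingleton _
  · rw [leadingCoeff_map_eq_of_isUnit_leadingCoeff i hp]
    exact hp.map i

theorem comp_left_injective_of_isUnit_leadingCoeff {b : R[X]} (hdeg : b.natDegree ≠ 0)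
    (hunit : IsUnit b.leadingCoeff) : Function.Injective fun p : R[X] ↦ p.comp b :=
  transcendental_iff_injective.1 (b.transcendental hdeg hunit.mem_nonZeroDivisors)

theorem dvd_of_dvd_C_mul {p q : R[X]} (hp : IsUnit p.leadingCoeff) {r : R}
    (hr : r ∈ nonZeroDivisors R) (hdvd : p ∣ C r * q) : p ∣ q := by
  have hmonic := monic_of_isUnit_leadingCoeff_inv_smul hp
  have hassoc : Associated p (hp.unit⁻¹ • p) :=
    ⟨Units.map C.toMonoidHom hp.unit⁻¹, by
      simp [Units.smul_def, smul_eq_C_mul, mul_comm]⟩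
  rw [hassoc.dvd_iff_dvd_left, ← modByMonic_eq_zero_iff_dvd hmonic] at hdvd ⊢
  rw [← smul_eq_C_mul, smul_modByMonic] at hdvd
  ext n
  exact hr.1 _ (by simpa using congrArg (coeff · n) hdvd)

theorem exists_comp_eq_of_dvd_coaddSubst_sub {b : R[X]} (hb : IsAdditivePoly b)
    (hunit : IsUnit b.leadingCoeff) (hdeg : b.natDegree ≠ 0) (p : R[X])
    (hdvd : b.map C ∣ coaddSubst p - C p) : ∃ q : R[X], q.comp b = p := by
  induction hn : p.natDegree using Nat.strong_induction_on generalizing p with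
  | _ n ih =>
  obtain ⟨q, hq⟩ : b ∣ p - C (p.eval 0) := by
    have hid : (evalRingHom (0 : R)).comp C = RingHom.id R := by ext; simp
    simpa [map_evalRingHom_coaddSubst, map_map, hid] using
      _root_.map_dvd (mapRingHom (evalRingHom (0 : R))) hdvd
  have hp : p = C (p.eval 0) + b * q := by rw [← hq, add_sub_cancel]
  generalize p.eval 0 = c at hp
  obtain rfl | hq0 := eq_or_ne q 0
  · exact ⟨C c, by simp [hp]⟩
  have hq_dvd : b.map C ∣ coaddSubst q - C q := by
    have hsplit : coaddSubst p - C p =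
        C b * (coaddSubst q - C q) + b.map C * coaddSubst q := by
      have hmul : coaddSubst p = C (C c) + coaddSubst b * coaddSubst q := by
        simp [hp, coaddSubst]
      rw [hmul, hb, hp, C_add, C_mul]
      ring
    refine dvd_of_dvd_C_mul (isUnit_leadingCoeff_map hunit C)
      (mem_nonZeroDivisors_of_leadingCoeff hunit.mem_nonZeroDivisors) ?_
    rwa [hsplit, dvd_add_left (dvd_mul_right _ _)] at hdvd
  have hlt : q.natDegree < n := by
    rw [← hn, hp, natDegree_C_add, natDegree_mul' (by simpa [hunit.mul_right_eq_zero] using hq0)]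
    omega
  obtain ⟨r, rfl⟩ := ih _ hlt q hq_dvd rfl
  exact ⟨C c + X * r, by simp [hp]⟩

-- The map substitutes `b(t₁)` and `b(t₂)` for the two variables.
theorem comp_map_compRingHom_injective {b : R[X]} (hdeg : b.natDegree ≠ 0)
    (hunit : IsUnit b.leadingCoeff) :
    Function.Injective fun p : R[X][X] ↦ (p.map (compRingHom b)).comp (b.map C) := by
  have houter : Function.Injective fun p : R[X][X] ↦ p.comp (b.map C) :=
    comp_left_injective_of_isUnit_leadingCoeff
      (by rwa [natDegree_map_eq_of_injective C_injective]) (isUnit_leadingCoeff_map hunit C)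
  exact houter.comp (map_injective _ (comp_left_injective_of_isUnit_leadingCoeff hdeg hunit))

end UnitLeadingCoeff

/-- The subalgebra `S^{𝔾ₐ}` of invariants of an algebra homomorphism `β : S → S[t]`, in practice a
coaction: the elements that `β` sends to constant polynomials. -/
noncomputable abbrev gaInvariants {k S : Type*} [CommSemiring k] [CommSemiring S] [Algebra k S]
    (β : S →ₐ[k] S[X]) : Subalgebra k S :=
  AlgHom.equalizer β CAlgHom

section AlgHom

variable {k S : Type*} [CommRing k] [CommRing S] [Algebra k S]

theorem injective_aeval_of_slice {γ : S →ₐ[k] S[X]} {s : S} (hs : γ s = C s + X) :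
    Function.Injective (aeval s : (gaInvariants γ)[X] →ₐ[gaInvariants γ] S) := by
  have hcomp : γ.toRingHom.comp (algebraMap (gaInvariants γ) S) =
      C.comp (algebraMap (gaInvariants γ) S) :=
    RingHom.ext fun x ↦ x.2
  have htaylor (p : (gaInvariants γ)[X]) :
      γ (aeval s p) = taylor s (p.map (algebraMap (gaInvariants γ) S)) := by
    calc γ (aeval s p) = p.eval₂ (γ.toRingHom.comp (algebraMap _ S)) (γ s) :=
          hom_eval₂ p (algebraMap _ S) γ.toRingHom s
      _ = taylor s (p.map (algebraMap (gaInvariants γ) S)) := by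
          rw [hcomp, hs, taylor_apply, comp, eval₂_map, add_comm]
  intro p q hpq
  apply map_injective _ (FaithfulSMul.algebraMap_injective (gaInvariants γ) S)
  apply taylor_injective s
  rw [← htaylor, ← htaylor, hpq]

theorem exists_algHom_comp_eq {β : S →ₐ[k] S[X]} {b : S[X]}
    (hunit : IsUnit b.leadingCoeff) (hdeg : b.natDegree ≠ 0)
    (hcomp : ∀ f, ∃ q : S[X], q.comp b = β f) :
    ∃ γ : S →ₐ[k] S[X], ∀ f, (γ f).comp b = β f := by
  let compb : S[X] →ₐ[k] S[X] := (aeval b).restrictScalars k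
  have hinj : Function.Injective compb := comp_left_injective_of_isUnit_leadingCoeff hdeg hunit
  let e := AlgEquiv.ofInjective compb hinj
  refine ⟨e.symm.toAlgHom.comp (β.codRestrict compb.range hcomp), fun f ↦ ?_⟩
  exact congrArg Subtype.val (e.apply_symm_apply ⟨β f, hcomp f⟩)

end AlgHom

namespace IsGaCoaction

variable {k S : Type*} [CommRing k] [CommRing S] [Algebra k S]

section Slice

variable {γ : S →ₐ[k] S[X]} (hγ : IsGaCoaction γ) {s : S} (hs : γ s = C s + X)
include hγ hs

theorem eval_neg_mem_gaInvariants (f : S) : (γ f).eval (-s) ∈ gaInvariants γ := by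
  change γ ((γ f).eval (-s)) = C ((γ f).eval (-s))
  calc γ ((γ f).eval (-s))
      = ((γ f).map γ.toRingHom).eval (γ (-s)) := by
        rw [eval_map]
        exact (eval₂_at_apply γ.toRingHom (-s)).symm
    _ = (γ f).comp (X + γ (-s)) := by rw [← hγ.2, eval_coaddSubst]
    _ = C ((γ f).eval (-s)) := by
        rw [map_neg, hs, neg_add_rev, add_neg_cancel_left, ← C_neg, comp_C]

theorem surjective_aeval_of_slice :
    Function.Surjective (aeval s : (gaInvariants γ)[X] →ₐ[gaInvariants γ] S) := by
  intro f
  let π : S →ₐ[k] gaInvariants γ :=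
    (((aeval (-s) : S[X] →ₐ[S] S).restrictScalars k).comp γ).codRestrict (gaInvariants γ)
      (hγ.eval_neg_mem_gaInvariants hs)
  have hπ : (algebraMap (gaInvariants γ) S).comp π.toRingHom =
      (evalRingHom (-s)).comp γ.toRingHom := rfl
  refine ⟨(γ f).map π.toRingHom, ?_⟩
  calc aeval s ((γ f).map π.toRingHom)
      = (((γ f).map γ.toRingHom).map (evalRingHom (-s))).eval s := by
        rw [← eval_map_algebraMap, map_map, hπ, map_map]
    _ = f := by
        rw [← hγ.2, map_evalRingHom_coaddSubst, eval_comp]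
        simp [hγ.1]

end Slice

section Quotient

variable {β : S →ₐ[k] S[X]} {b : S[X]}

theorem exists_comp_eq (hβ : IsGaCoaction β) (hb : IsAdditivePoly b)
    (hunit : IsUnit b.leadingCoeff) (hdeg : b.natDegree ≠ 0)
    (hinv : b.map β.toRingHom = b.map C) (hdvd : ∀ f, b ∣ β f - C f) (f : S) :
    ∃ q : S[X], q.comp b = β f := by
  apply exists_comp_eq_of_dvd_coaddSubst_sub hb hunit hdeg
  have hmap : coaddSubst (β f) - C (β f) = (β f - C f).map β.toRingHom := by
    rw [hβ.2, Polynomial.map_sub, map_C]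
    rfl
  rw [hmap, ← hinv]
  exact Polynomial.map_dvd _ (hdvd f)

theorem of_comp_eq (hβ : IsGaCoaction β) (hb : IsAdditivePoly b)
    (hunit : IsUnit b.leadingCoeff) (hdeg : b.natDegree ≠ 0)
    (hinv : b.map β.toRingHom = b.map C) {γ : S →ₐ[k] S[X]}
    (hcomp : ∀ f, (γ f).comp b = β f) : IsGaCoaction γ := by
  refine ⟨fun f ↦ ?_, fun f ↦ comp_map_compRingHom_injective hdeg hunit ?_⟩
  · simpa only [← hcomp, eval_comp, hb.eval_zero] using hβ.1 f
  · have hβγ : β.toRingHom = (compRingHom b).comp γ.toRingHom :=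
      RingHom.ext fun f ↦ (hcomp f).symm
    calc ((coaddSubst (γ f)).map (compRingHom b)).comp (b.map C)
        = (β f).map β.toRingHom := by rw [← hb.coaddSubst_comp, hcomp, hβ.2]
      _ = ((γ f).map β.toRingHom).comp (b.map C) := by
          rw [← hcomp, Polynomial.map_comp, hinv]
      _ = (((γ f).map γ.toRingHom).map (compRingHom b)).comp (b.map C) := by
          rw [map_map, ← hβγ]

theorem bijective_aeval (hβ : IsGaCoaction β) (hb : IsAdditivePoly b)
    (hunit : IsUnit b.leadingCoeff) (hinv : b.map β.toRingHom = b.map C)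
    (hdvd : ∀ f, b ∣ β f - C f) {s : S} (hs : β s = C s + b) :
    Function.Bijective (aeval s : (gaInvariants β)[X] →ₐ[gaInvariants β] S) := by
  cases subsingleton_or_nontrivial S
  · exact ⟨Function.injective_of_subsingleton _, Function.surjective_to_subsingleton _⟩
  have hdeg := hb.natDegree_ne_zero hunit
  obtain ⟨γ, hcomp⟩ :=
    exists_algHom_comp_eq hunit hdeg (hβ.exists_comp_eq hb hunit hdeg hinv hdvd)
  have hγ : IsGaCoaction γ := hβ.of_comp_eq hb hunit hdeg hinv hcomp
  have hβ_iff (f : S) (q : S[X]) : β f = q.comp b ↔ γ f = q := by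
    rw [← hcomp, (comp_left_injective_of_isUnit_leadingCoeff hdeg hunit).eq_iff]
  have hγs : γ s = C s + X := (hβ_iff s _).1 (by simpa using hs)
  have hinvariants : gaInvariants β = gaInvariants γ := by
    ext f
    simpa using hβ_iff f (C f)
  rw [hinvariants]
  exact ⟨injective_aeval_of_slice hγs, hγ.surjective_aeval_of_slice hγs⟩

end Quotient

end IsGaCoaction

section Localization

variable {k A S : Type*} [CommRing k] [CommRing A] [CommRing S] [Algebra k A] [Algebra A S]
  [Algebra k S] {β : A →ₐ[k] A[X]} {βS : S →ₐ[k] S[X]}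

theorem algebraMap_mem_gaInvariants
    (hext : ∀ a, βS (algebraMap A S a) = (β a).map (algebraMap A S)) {a : A}
    (ha : a ∈ gaInvariants β) : algebraMap A S a ∈ gaInvariants βS := by
  change βS (algebraMap A S a) = C (algebraMap A S a)
  rw [hext, show β a = C a from ha, map_C]

theorem dvd_sub_C_of_isLocalization {N : Submonoid A} [IsLocalization N S]
    (hN : N ≤ (gaInvariants β).toSubmonoid)
    (hext : ∀ a, βS (algebraMap A S a) = (β a).map (algebraMap A S)) {b : A[X]}
    (hdvd : ∀ a, b ∣ β a - C a) (f : S) : b.map (algebraMap A S) ∣ βS f - C f := by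
  obtain ⟨⟨a, d⟩, hd : f * algebraMap A S d = algebraMap A S a⟩ := IsLocalization.surj N f
  have hunit : IsUnit (C (algebraMap A S d)) := (IsLocalization.map_units S d).map C
  have hβd : βS (algebraMap A S d) = C (algebraMap A S d) :=
    algebraMap_mem_gaInvariants hext (hN d.2)
  have hmul : (βS f - C f) * C (algebraMap A S d) = (β a - C a).map (algebraMap A S) := by
    rw [sub_mul, ← C_mul, ← hβd, ← map_mul, hd, hext, Polynomial.map_sub, map_C]
  rw [← hunit.dvd_mul_right, hmul]
  exact Polynomial.map_dvd _ (hdvd a)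

theorem exists_eq_C_add_of_isUnit_algebraMap
    (hext : ∀ a, βS (algebraMap A S a) = (β a).map (algebraMap A S)) {b : A[X]} {g h : A}
    (hh : h ∈ gaInvariants β) (hu : IsUnit (algebraMap A S h)) (hpair : β g = C g + b * C h) :
    ∃ s, βS s = C s + b.map (algebraMap A S) := by
  have hβh : βS (algebraMap A S h) = C (algebraMap A S h) :=
    algebraMap_mem_gaInvariants hext hh
  obtain ⟨s, hs⟩ : ∃ s, s * algebraMap A S h = algebraMap A S g := by
    obtain ⟨w, hw⟩ := hu.exists_left_inv
    exact ⟨algebraMap A S g * w, by rw [mul_assoc, hw, mul_one]⟩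
  refine ⟨s, (hu.map C).mul_right_cancel ?_⟩
  calc βS s * C (algebraMap A S h)
      = βS (algebraMap A S g) := by rw [← hβh, ← map_mul, hs]
    _ = (C s + b.map (algebraMap A S)) * C (algebraMap A S h) := by
        rw [hext, hpair, Polynomial.map_add, Polynomial.map_mul, map_C, map_C, ← hs, C_mul,
          add_mul]

end Localization

theorem stmt14_general {k A S : Type*} [CommRing k] [CommRing A] [CommRing S]
    [Algebra k A] [Algebra A S] [Algebra k S] [IsScalarTower k A S]
    {N : Submonoid A} [IsLocalization N S] {β : A →ₐ[k] A[X]}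
    (hN : N ≤ (gaInvariants β).toSubmonoid) {b : k[X]} (hb : IsAdditivePoly b)
    (hunit : IsUnit b.leadingCoeff) (hquasi : ∀ f, b.map (algebraMap k A) ∣ β f - C f)
    {g h : A} (hh : h ∈ N) (hpair : β g = C g + b.map (algebraMap k A) * C h)
    {βS : S →ₐ[k] S[X]} (hβS : IsGaCoaction βS)
    (hext : ∀ a, βS (algebraMap A S a) = (β a).map (algebraMap A S)) :
    ∃ φ : (gaInvariants βS)[X] ≃ₐ[k] S,
      (∀ x : gaInvariants βS, φ (C x) = x) ∧
      βS (φ X) = C (φ X) + b.map (algebraMap k S) := by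
  have hmap : (b.map (algebraMap k A)).map (algebraMap A S) = b.map (algebraMap k S) := by
    rw [map_map, ← IsScalarTower.algebraMap_eq]
  obtain ⟨s, hs⟩ := exists_eq_C_add_of_isUnit_algebraMap hext (hN hh)
    (IsLocalization.map_units S (⟨h, hh⟩ : N)) hpair
  have hdvd := dvd_sub_C_of_isLocalization hN hext hquasi
  rw [hmap] at hs hdvd
  have hinv : (b.map (algebraMap k S)).map βS.toRingHom = (b.map (algebraMap k S)).map C := by
    rw [map_map, map_map]
    exact congrArg (b.map ·) (RingHom.ext βS.commutes)
  let φ : (gaInvariants βS)[X] →ₐ[k] S := (aeval s).restrictScalars k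
  have hφ : Function.Bijective φ :=
    hβS.bijective_aeval (hb.map _) (isUnit_leadingCoeff_map hunit _) hinv hdvd hs
  have hφX : φ X = s := aeval_X s
  exact ⟨AlgEquiv.ofBijective φ hφ, fun x ↦ aeval_C s x, by simpa [hφX] using hs⟩

/-- quasi-principle pairs give trivial bundles after replacing
`𝔾ₐ` by `𝔾ₐ//ker b(t)`: if every `β(f) − f` lies in `⟨b(t)⟩` and
`(g, h^e)` is a (quasi-principle) `b(t)`-pair, then there is a `k`-algebra
isomorphism `(A_h)^{𝔾ₐ}[T] ≃ A_h` restricting to the inclusion on invariants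
with `β_h(φ(T)) = φ(T) + b(t)`. -/
theorem stmt14 {k : Type*} [Field k] [IsAlgClosed k]
    {A : Type*} [CommRing A] [IsDomain A] [Algebra k A]
    (hfg : Algebra.FiniteType k A)
    (β : A →ₐ[k] Polynomial A) (hβ : IsGaCoaction β)
    (b : Polynomial k) (hb : IsAdditivePoly b) (hb0 : b ≠ 0)
    (h : A) (hh0 : h ≠ 0) (hinv : β h = Polynomial.C h)
    (hquasi : ∀ f : A, β f - Polynomial.C f ∈
      Ideal.span {b.map (algebraMap k A)})
    (g : A) (e : ℕ)
    (hpair : β g = Polynomial.C g +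
      b.map (algebraMap k A) * Polynomial.C (h ^ e))
    (S : Type*) [CommRing S] [Algebra A S] [Algebra k S] [IsScalarTower k A S]
    [IsLocalization.Away h S]
    (βS : S →ₐ[k] Polynomial S) (hβS : IsGaCoaction βS)
    (hext : ∀ a : A, βS (algebraMap A S a) = (β a).map (algebraMap A S)) :
    ∃ φ : Polynomial ↥(AlgHom.equalizer βS (Polynomial.CAlgHom (R := k) (A := S)))
        ≃ₐ[k] S,
      (∀ x : ↥(AlgHom.equalizer βS (Polynomial.CAlgHom (R := k) (A := S))),
        φ (Polynomial.C x) = (x : S)) ∧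
      βS (φ Polynomial.X) =
        Polynomial.C (φ Polynomial.X) + b.map (algebraMap k S) := by
  exact stmt14_general (Submonoid.powers_le.2 hinv) hb (leadingCoeff_ne_zero.2 hb0).isUnit
    (fun f ↦ Ideal.mem_span_singleton.1 (hquasi f)) ⟨e, rfl⟩ hpair hβS hext
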